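/- Full-transcript simulation using only the public evidence: let G be a group, g ∈ G an element of finite order n > 0, let c : ZMod n be the secret, and let e = g^(c.val) be the public evidence. Then the distribution of the real i = 1 transcript (s, r') = (g^(r.val), r + c), for r uniform on ZMod n, equals the distribution of the simulated transcript (g^(t.val) * e⁻¹, t), for t uniform on ZMod n. Hence a simulator knowing only the public evidence e (and not c) produces transcripts identically distributed to the real prover's, so the transcript reveals nothing about c beyond the evidence. -/

import Mathlib

/-!
Translation by `c` is a bijection of `ZMod n`, so it preserves the uniform distribution, and the
simulator's `t` may be replaced by `r + c` with `r` uniform. Since `g` has order `n`,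
`g ^ (r + c).val = g ^ r.val * e`, so the two transcripts then agree for every single `r`.
-/

/-- Full-transcript simulation from the public evidence alone: if `g` has
finite order `n > 0`, secret `c : ZMod n`, and evidence `e = g^(c.val)`, then
the real `i = 1` transcript `(g^(r.val), r + c)` for uniform `r` is distributed
identically to the simulated transcript `(g^(t.val) * e⁻¹, t)` for uniform `t`. -/
theorem transcript_simulatable {G : Type*} [Group G] (g : G) (n : ℕ) [NeZero n]
    (hord : orderOf g = n) (c : ZMod n) (e : G) (he : e = g ^ c.val) :
    (PMF.uniformOfFintype (ZMod n)).map
        (fun r => ((g ^ r.val, r + c) : G × ZMod n)) =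
      (PMF.uniformOfFintype (ZMod n)).map
        (fun t => ((g ^ t.val * e⁻¹, t) : G × ZMod n)) := by
  have hunif : (PMF.uniformOfFintype (ZMod n)).map (fun r => r + c) =
      PMF.uniformOfFintype (ZMod n) := by
    ext t
    rw [PMF.map_apply, tsum_eq_single (t - c)]
    · simp
    · intro r hr
      rw [if_neg]
      rintro rfl
      exact hr (by simp)
  -- Substitute `t = r + c` in the simulated transcript only.
  conv_rhs => rw [← hunif, PMF.map_comp]
  congr 1
  funext r
  have hpow : g ^ (r + c).val = g ^ r.val * g ^ c.val := by
    rw [ZMod.val_add, ← pow_add]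
    have hmod := pow_mod_orderOf g (r.val + c.val)
    rwa [hord] at hmod
  simp [he, hpow]
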